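/- For every 1-categorically graded set X there exists a free pre-1-category C_X on X, namely: there is an injective morphism of graded sets ι_X : X → C_X, and for every pre-1-category D and every morphism of 1-categorically graded sets F : X → D (into the underlying graded set of D), F factors uniquely through ι_X, i.e. there is a unique morphism of pre-1-categories F̃ : C_X → D with F̃ ∘ ι_X = F. Equivalently, the assignment X ↦ C_X is left adjoint to the forgetful functor from the category of pre-1-categories to the category of 1-categorically graded sets. -/

import Mathlib

universe u v w

/-- A 1-categorically graded set: a set with source and target maps satisfying
`ρ₀ ∘ σ₀ = σ₀` for all `ρ₀, σ₀ ∈ {s₀, t₀}`. -/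
structure Gr1Str (S : Type u) where
  s0 : S → S
  t0 : S → S
  s0_s0 : ∀ a, s0 (s0 a) = s0 a
  t0_s0 : ∀ a, t0 (s0 a) = s0 a
  s0_t0 : ∀ a, s0 (t0 a) = t0 a
  t0_t0 : ∀ a, t0 (t0 a) = t0 a

/-- A morphism of 1-categorically graded sets. -/
structure Gr1Hom {S : Type u} {T : Type v} (A : Gr1Str S) (B : Gr1Str T) where
  toFun : S → T
  map_s0 : ∀ a, toFun (A.s0 a) = B.s0 (toFun a)
  map_t0 : ∀ a, toFun (A.t0 a) = B.t0 (toFun a)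

/-- A pre-1-category: a 1-categorically graded set with a partial composition `*₀`,
defined exactly on pairs `(a, b)` with `s₀ a = t₀ b`. -/
structure Pre1Str (S : Type u) extends Gr1Str S where
  comp0 : (a b : S) → s0 a = t0 b → S
  s0_comp0 : ∀ a b (h : s0 a = t0 b), s0 (comp0 a b h) = s0 b
  t0_comp0 : ∀ a b (h : s0 a = t0 b), t0 (comp0 a b h) = t0 a

/-- A morphism of pre-1-categories. -/
structure Pre1Hom {S : Type u} {T : Type v} (A : Pre1Str S) (B : Pre1Str T) extends
    Gr1Hom A.toGr1Str B.toGr1Str where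
  map_comp0 : ∀ a b (h : A.s0 a = A.t0 b) (h' : B.s0 (toFun a) = B.t0 (toFun b)),
    toFun (A.comp0 a b h) = B.comp0 (toFun a) (toFun b) h'

/-! The cells of the free pre-1-category are the bracketed composites of generators whose boundaries
match. Sources and targets of composites are elements of `X`, so composability is decided in `X` and
no relations between composites have to be imposed. A morphism `X → D` extends by evaluating each
bracketing in `D`, and the extension is unique because the cells on which two morphisms agree are
closed under composition. -/

theorem Gr1Hom.s0_eq_t0 {S : Type u} {T : Type v} {A : Gr1Str S} {B : Gr1Str T} (H : Gr1Hom A B)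
    {a b : S} (h : A.s0 a = A.t0 b) : B.s0 (H.toFun a) = B.t0 (H.toFun b) := by
  rw [← H.map_s0, h, H.map_t0]

namespace Pre1Hom

variable {S : Type u} {T : Type v} {A : Pre1Str S} {B : Pre1Str T} {H K : Pre1Hom A B}

@[ext]
theorem ext (h : ∀ a, H.toFun a = K.toFun a) : H = K := by
  obtain ⟨⟨f, _, _⟩, _⟩ := H
  obtain ⟨⟨g, _, _⟩, _⟩ := K
  obtain rfl : f = g := funext h
  rfl

theorem toFun_comp0_congr {a b : S} (h : A.s0 a = A.t0 b) (ha : H.toFun a = K.toFun a)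
    (hb : H.toFun b = K.toFun b) : H.toFun (A.comp0 a b h) = K.toFun (A.comp0 a b h) := by
  rw [H.map_comp0 a b h (H.s0_eq_t0 h), K.map_comp0 a b h (K.s0_eq_t0 h)]
  simp only [ha, hb]

end Pre1Hom

namespace Gr1Str

variable {X : Type u} {G : Gr1Str X}

/-- An object of a graded set: an element which is its own source and target. -/
def IsObject (G : Gr1Str X) (a : X) : Prop :=
  G.s0 a = a ∧ G.t0 a = a

theorem isObject_s0 (G : Gr1Str X) (x : X) : G.IsObject (G.s0 x) :=
  ⟨G.s0_s0 x, G.t0_s0 x⟩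

theorem isObject_t0 (G : Gr1Str X) (x : X) : G.IsObject (G.t0 x) :=
  ⟨G.s0_t0 x, G.t0_t0 x⟩

/-- Formal composites of elements of a graded set, indexed by source and target. The matching
condition is an argument of `comp`, rather than a shared index, so that composing cells needs no
transport. -/
inductive Composite (G : Gr1Str X) : X → X → Type u
  | of (x : X) : Composite G (G.s0 x) (G.t0 x)
  | comp {a b b' c : X} (f : Composite G b c) (g : Composite G a b') (h : b = b') : Composite G a c

namespace Composite

theorem isObject_source {a b : X} (f : Composite G a b) : G.IsObject a := by
  induction f with
  | of x => exact G.isObject_s0 x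
  | comp _ _ _ _ ihg => exact ihg

theorem isObject_target {a b : X} (f : Composite G a b) : G.IsObject b := by
  induction f with
  | of x => exact G.isObject_t0 x
  | comp _ _ _ ihf _ => exact ihf

/-- The leftmost generator of a formal composite. It recovers `x` from `of x`. -/
def head {a b : X} : Composite G a b → X
  | of x => x
  | comp f _ _ => f.head

/-- Evaluation of a formal composite in a pre-1-category along a morphism of graded sets. The
boundary of the value is part of the recursion because `comp0` can only be applied to values already
known to be composable. -/
def eval {D : Type v} {DD : Pre1Str D} (F : Gr1Hom G DD.toGr1Str) {a b : X} :
    Composite G a b → {d : D // DD.s0 d = F.toFun a ∧ DD.t0 d = F.toFun b}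
  | of x => ⟨F.toFun x, (F.map_s0 x).symm, (F.map_t0 x).symm⟩
  | comp f g h =>
    let ⟨d, hd⟩ := f.eval F
    let ⟨e, he⟩ := g.eval F
    ⟨DD.comp0 d e (hd.1.trans ((congrArg F.toFun h).trans he.2.symm)),
      (DD.s0_comp0 _ _ _).trans he.1, (DD.t0_comp0 _ _ _).trans hd.2⟩

end Composite

/-- A cell of the free pre-1-category on a graded set: a formal composite with its boundary. -/
structure FreeCell (G : Gr1Str X) where
  source : X
  target : X
  composite : Composite G source target

namespace FreeCell

/-- The generator of the free pre-1-category given by an element of the graded set. -/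
def of (G : Gr1Str X) (x : X) : FreeCell G :=
  ⟨G.s0 x, G.t0 x, .of x⟩

theorem of_injective (G : Gr1Str X) : Function.Injective (of G) :=
  Function.LeftInverse.injective (g := fun p => p.composite.head) fun _ => rfl

end FreeCell

/-- The free pre-1-category on a graded set. -/
def free (G : Gr1Str X) : Pre1Str (FreeCell G) where
  s0 p := .of G p.source
  t0 p := .of G p.target
  s0_s0 p := congrArg (FreeCell.of G) p.composite.isObject_source.1
  t0_s0 p := congrArg (FreeCell.of G) p.composite.isObject_source.2
  s0_t0 p := congrArg (FreeCell.of G) p.composite.isObject_target.1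
  t0_t0 p := congrArg (FreeCell.of G) p.composite.isObject_target.2
  comp0 p q h := ⟨q.source, p.target, .comp p.composite q.composite (FreeCell.of_injective G h)⟩
  s0_comp0 _ _ _ := rfl
  t0_comp0 _ _ _ := rfl

namespace free

/-- The inclusion of generators, as a morphism of graded sets. -/
def ι (G : Gr1Str X) : Gr1Hom G G.free.toGr1Str where
  toFun := FreeCell.of G
  map_s0 _ := rfl
  map_t0 _ := rfl

variable {D : Type v} {DD : Pre1Str D}

/-- The extension of a morphism of graded sets to the free pre-1-category. -/
def lift (F : Gr1Hom G DD.toGr1Str) : Pre1Hom G.free DD where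
  toFun p := (p.composite.eval F).1
  map_s0 p := (p.composite.eval F).2.1.symm
  map_t0 p := (p.composite.eval F).2.2.symm
  map_comp0 _ _ _ _ := rfl

theorem lift_ι (F : Gr1Hom G DD.toGr1Str) (x : X) : (lift F).toFun ((ι G).toFun x) = F.toFun x :=
  rfl

theorem hom_ext {H K : Pre1Hom G.free DD}
    (h : ∀ x, H.toFun ((ι G).toFun x) = K.toFun ((ι G).toFun x)) : H = K := by
  ext ⟨a, b, f⟩
  induction f with
  | of x => exact h x
  | comp f g hfg ihf ihg =>
    exact Pre1Hom.toFun_comp0_congr (congrArg (FreeCell.of G) hfg) ihf ihg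

end free

end Gr1Str

theorem statement0_general {X : Type u} (G : Gr1Str X) (D : Type v) (DD : Pre1Str D)
    (F : Gr1Hom G DD.toGr1Str) :
    ∃! Ft : Pre1Hom G.free DD, ∀ x, Ft.toFun ((Gr1Str.free.ι G).toFun x) = F.toFun x :=
  ⟨Gr1Str.free.lift F, Gr1Str.free.lift_ι F, fun _ hH =>
    Gr1Str.free.hom_ext fun x => (hH x).trans (Gr1Str.free.lift_ι F x).symm⟩

/-- For every 1-categorically graded set `X` there exists a free
pre-1-category `C_X` on `X`: an injective morphism of graded sets `ι_X : X → C_X` such that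
every morphism of 1-categorically graded sets `F : X → D` into a pre-1-category `D` factors
uniquely through `ι_X` via a morphism of pre-1-categories `F̃ : C_X → D`; equivalently,
`X ↦ C_X` is left adjoint to the forgetful functor from pre-1-categories to
1-categorically graded sets. -/
theorem statement0 {X1 : Type u} (G : Gr1Str X1) :
    ∃ (Cc : Type u) (CC : Pre1Str Cc) (iota : Gr1Hom G CC.toGr1Str),
      Function.Injective iota.toFun ∧
      ∀ (D : Type u) (DD : Pre1Str D) (F : Gr1Hom G DD.toGr1Str),
        ∃! Ft : Pre1Hom CC DD, ∀ x, Ft.toFun (iota.toFun x) = F.toFun x :=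
  ⟨G.FreeCell, G.free, Gr1Str.free.ι G, Gr1Str.FreeCell.of_injective G,
    statement0_general G⟩
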